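/- Let λ ∈ ℂ. Then there exist constants C, c > 0, a potential W : ℝ² → ℂ², and a nonzero twice continuously differentiable function u : ℝ² → ℂ such that Δu + λu = W·∇u on ℝ² (where W·∇u = W₁ ∂₁u + W₂ ∂₂u), |W(x)| ≤ C·⟨x⟩^{-1/2} for all x ∈ ℝ², and |u(x)| ≤ C·exp(−c|x|) for all x ∈ ℝ². -/

import Mathlib

noncomputable section

/-- Partial derivative of `u` in the `i`-th coordinate direction. -/
def pd (u : EuclideanSpace ℝ (Fin 2) → ℂ) (i : Fin 2) (x : EuclideanSpace ℝ (Fin 2)) : ℂ :=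
  fderiv ℝ u x (EuclideanSpace.single i 1)

/-- Laplacian on ℝ²: sum of second partial derivatives. -/
def lap (u : EuclideanSpace ℝ (Fin 2) → ℂ) (x : EuclideanSpace ℝ (Fin 2)) : ℂ :=
  ∑ i, pd (fun y => pd u i y) i x


abbrev E2 := EuclideanSpace ℝ (Fin 2)

/-- The square of the radius. -/
def tt (x : E2) : ℝ := x 0 ^ 2 + x 1 ^ 2

/-- The complex coordinate `x₀ + d x₁`. -/
def ww (d : ℂ) (x : E2) : ℂ := (x 0 : ℂ) + d * (x 1 : ℂ)

/-- Coefficients of the gradient of `ww`. -/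
def dd (d : ℂ) (i : Fin 2) : ℂ := if i = 0 then 1 else d

lemma tt_contDiff : ContDiff ℝ 2 tt := by unfold tt; fun_prop

lemma ww_contDiff (d : ℂ) : ContDiff ℝ 2 (ww d) := by
  unfold ww
  have h : ∀ i : Fin 2, ContDiff ℝ 2 (fun x : E2 => ((x i : ℝ) : ℂ)) := fun i =>
    Complex.ofRealCLM.contDiff.comp (by fun_prop)
  exact (h 0).add (contDiff_const.mul (h 1))

lemma hasFDerivAt_coord (i : Fin 2) (x : E2) :
    HasFDerivAt (fun y : E2 => y i) (EuclideanSpace.proj i : E2 →L[ℝ] ℝ) x :=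
  (EuclideanSpace.proj i : E2 →L[ℝ] ℝ).hasFDerivAt

lemma pd_coord (i j : Fin 2) (x : E2) :
    pd (fun y => ((y i : ℝ) : ℂ)) j x = if i = j then 1 else 0 := by
  have h := (Complex.ofRealCLM.hasFDerivAt (x := x i)).comp x (hasFDerivAt_coord i x)
  unfold pd
  have h2 : fderiv ℝ (fun y : E2 => ((y i : ℝ) : ℂ)) x = _ := h.fderiv
  rw [h2]
  simp
  split_ifs <;> simp

lemma pd_comp_tt (g : ℝ → ℂ) (hg : Differentiable ℝ g) (i : Fin 2) (x : E2) :
    pd (fun y => g (tt y)) i x = 2 * (x i : ℂ) * deriv g (tt x) := by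
  have h1 : HasFDerivAt tt _ x :=
    ((hasFDerivAt_coord 0 x).pow 2).add ((hasFDerivAt_coord 1 x).pow 2)
  have h := ((hg (tt x)).hasDerivAt).hasFDerivAt.comp x h1
  unfold pd
  have h2 : fderiv ℝ (fun y => g (tt y)) x = _ := h.fderiv
  rw [h2]
  fin_cases i <;> simp

lemma coord_diff (i : Fin 2) : Differentiable ℝ (fun x : E2 => ((x i : ℝ) : ℂ)) := fun x =>
  ((Complex.ofRealCLM.hasFDerivAt (x := x i)).comp x (hasFDerivAt_coord i x)).differentiableAt

lemma pd_mul (f g : E2 → ℂ) (x : E2) (hf : DifferentiableAt ℝ f x) (hg : DifferentiableAt ℝ g x)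
    (i : Fin 2) : pd (fun y => f y * g y) i x = pd f i x * g x + f x * pd g i x := by
  unfold pd; rw [fderiv_fun_mul hf hg]; simp; ring

lemma pd_add (f g : E2 → ℂ) (x : E2) (hf : DifferentiableAt ℝ f x) (hg : DifferentiableAt ℝ g x)
    (i : Fin 2) : pd (fun y => f y + g y) i x = pd f i x + pd g i x := by
  unfold pd; rw [fderiv_fun_add hf hg]; simp

lemma pd_cmul (c : ℂ) (f : E2 → ℂ) (x : E2) (hf : DifferentiableAt ℝ f x)
    (i : Fin 2) : pd (fun y => c * f y) i x = c * pd f i x := by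
  rw [pd_mul _ _ x (by fun_prop) hf]; simp [pd]

lemma pd_ww (d : ℂ) (i : Fin 2) (x : E2) : pd (ww d) i x = dd d i := by
  have h : ww d = fun y : E2 => ((y 0 : ℝ) : ℂ) + d * ((y 1 : ℝ) : ℂ) := rfl
  rw [h, pd_add _ _ x (coord_diff 0 x) ((coord_diff 1 x).const_mul d),
    pd_cmul _ _ x (coord_diff 1 x), pd_coord, pd_coord]
  fin_cases i <;> simp [dd]

lemma pd_ww_pow (d : ℂ) (n : ℕ) (i : Fin 2) (x : E2) :
    pd (fun y => ww d y ^ n) i x = n * ww d x ^ (n - 1) * dd d i := by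
  have hw : DifferentiableAt ℝ (ww d) x := (ww_contDiff d).differentiable (by norm_num) x
  have h := (hw.hasFDerivAt).pow n
  have h2 : fderiv ℝ (fun y => ww d y ^ n) x = _ := h.fderiv
  rw [← pd_ww d i x]
  unfold pd
  rw [h2]
  simp

/-- The basic building block. -/
def VV (g : ℝ → ℂ) (d : ℂ) (n : ℕ) (x : E2) : ℂ := g (tt x) * ww d x ^ n

lemma VV_contDiff (g : ℝ → ℂ) (hg : ContDiff ℝ 2 g) (d : ℂ) (n : ℕ) : ContDiff ℝ 2 (VV g d n) :=
  (hg.comp tt_contDiff).mul ((ww_contDiff d).pow n)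

lemma comp_tt_diff (g : ℝ → ℂ) (hg : Differentiable ℝ g) : Differentiable ℝ (fun y => g (tt y)) :=
  hg.comp (tt_contDiff.differentiable (by norm_num))

lemma pow_diff (d : ℂ) (n : ℕ) : Differentiable ℝ (fun y => ww d y ^ n) :=
  ((ww_contDiff d).pow n).differentiable (by norm_num)

lemma pd_VV (g : ℝ → ℂ) (hg : Differentiable ℝ g) (d : ℂ) (n : ℕ) (i : Fin 2) (x : E2) :
    pd (VV g d n) i x = 2 * (((x i : ℝ) : ℂ) * (deriv g (tt x) * ww d x ^ n))
      + (n * dd d i) * (g (tt x) * ww d x ^ (n - 1)) := by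
  unfold VV
  rw [pd_mul _ _ x (comp_tt_diff g hg x) (pow_diff d n x), pd_comp_tt g hg, pd_ww_pow]
  ring

lemma lap_VV (g : ℝ → ℂ) (hg : ContDiff ℝ 2 g) (d : ℂ) (hd : d ^ 2 = -1) (n : ℕ) (hn : 1 ≤ n)
    (x : E2) :
    lap (VV g d n) x = ww d x ^ n *
      (4 * (tt x : ℂ) * deriv (deriv g) (tt x) + 4 * (n + 1) * deriv g (tt x)) := by
  have hg1 : Differentiable ℝ g := hg.differentiable (by norm_num)
  have hg2 : Differentiable ℝ (deriv g) := 
    (((contDiff_succ_iff_deriv (n := 1)).1 hg).2.2).differentiable (by norm_num)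
  have key : ∀ i, pd (fun y => pd (VV g d n) i y) i x =
      2 * (deriv g (tt x) * ww d x ^ n + (x i : ℂ) * (2 * (x i : ℂ) * deriv (deriv g) (tt x) 
        * ww d x ^ n + deriv g (tt x) * (n * ww d x ^ (n - 1) * dd d i)))
      + (n * dd d i) * (2 * (x i : ℂ) * deriv g (tt x) * ww d x ^ (n - 1)
        + g (tt x) * ((n - 1 : ℕ) * ww d x ^ (n - 1 - 1) * dd d i)) := by
    intro i
    have e : (fun y => pd (VV g d n) i y) = fun y => 2 * (((y i : ℝ) : ℂ) * (deriv g (tt y) * ww d y ^ n))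
      + (n * dd d i) * (g (tt y) * ww d y ^ (n - 1)) := by
      funext y; exact pd_VV g hg1 d n i y
    have d1 := (comp_tt_diff g hg1 x)
    have d2 := (comp_tt_diff _ hg2 x)
    have d3 := pow_diff d n x
    have d4 := pow_diff d (n - 1) x
    have d5 := coord_diff i x
    have d23 := d2.fun_mul d3
    have d14 := d1.fun_mul d4
    have d523 := d5.fun_mul d23
    rw [e, pd_add _ _ x (d523.const_mul _) (d14.const_mul _),
      pd_cmul _ _ x d523, pd_cmul _ _ x d14, pd_mul _ _ x d5 d23,
      pd_mul _ _ x d2 d3, pd_mul _ _ x d1 d4, pd_coord, pd_ww_pow, pd_ww_pow, pd_comp_tt _ hg1,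
      pd_comp_tt _ hg2]
    simp
  unfold lap
  rw [Fin.sum_univ_two, key, key]
  have hw : ww d x ^ n = ww d x * ww d x ^ (n - 1) := by
    rw [← pow_succ']; congr 1; omega
  have hw2 : ww d x = (x 0 : ℂ) + d * (x 1 : ℂ) := rfl
  have ht : (tt x : ℂ) = (x 0 : ℂ) ^ 2 + (x 1 : ℂ) ^ 2 := by simp [tt]
  generalize ((n - 1 : ℕ) : ℂ) * ww d x ^ (n - 1 - 1) = Z
  rw [hw, ht]
  generalize ww d x ^ (n - 1) = P
  rw [hw2]
  simp only [dd, if_true, one_ne_zero, if_false]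
  linear_combination (n * g (tt x) * Z) * hd

/-- Radial derivative. -/
lemma rad_VV (g : ℝ → ℂ) (hg : Differentiable ℝ g) (d : ℂ) (n : ℕ) (hn : 1 ≤ n) (x : E2) :
    (x 0 : ℂ) * pd (VV g d n) 0 x + (x 1 : ℂ) * pd (VV g d n) 1 x = 
      (2 * (tt x : ℂ) * deriv g (tt x) + n * g (tt x)) * ww d x ^ n := by
  rw [pd_VV g hg, pd_VV g hg]
  have hw : ww d x ^ n = ww d x * ww d x ^ (n - 1) := by
    rw [← pow_succ']; congr 1; omega
  have hw2 : ww d x = (x 0 : ℂ) + d * (x 1 : ℂ) := rfl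
  have ht : (tt x : ℂ) = (x 0 : ℂ) ^ 2 + (x 1 : ℂ) ^ 2 := by simp [tt]
  rw [hw, ht]
  generalize ww d x ^ (n - 1) = P
  rw [hw2]
  simp only [dd, if_true, one_ne_zero, if_false]
  ring

/-- Angular derivative. -/
lemma ang_VV (g : ℝ → ℂ) (hg : Differentiable ℝ g) (d : ℂ) (hd : d ^ 2 = -1)
    (n : ℕ) (hn : 1 ≤ n) (x : E2) :
    (x 0 : ℂ) * pd (VV g d n) 1 x - (x 1 : ℂ) * pd (VV g d n) 0 x = d * n * VV g d n x := by
  rw [pd_VV g hg, pd_VV g hg]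
  unfold VV
  have hw : ww d x ^ n = ww d x * ww d x ^ (n - 1) := by
    rw [← pow_succ']; congr 1; omega
  have hw2 : ww d x = (x 0 : ℂ) + d * (x 1 : ℂ) := rfl
  rw [hw]
  generalize ww d x ^ (n - 1) = P
  rw [hw2]
  simp only [dd, if_true, one_ne_zero, if_false]
  linear_combination (-n * P * g (tt x) * (x 1 : ℂ)) * hd

lemma norm_ww (d : ℂ) (hd : d = Complex.I ∨ d = -Complex.I) (x : E2) :
    ‖ww d x‖ = ‖x‖ := by
  have h1 : ‖x‖ ^ 2 = x 0 ^ 2 + x 1 ^ 2 := by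
    rw [EuclideanSpace.norm_sq_eq]; simp
  have h2 : ‖ww d x‖ ^ 2 = x 0 ^ 2 + x 1 ^ 2 := by
    rw [← Complex.normSq_eq_norm_sq, Complex.normSq_apply]
    rcases hd with rfl | rfl <;> simp [ww] <;> ring
  exact (sq_eq_sq₀ (norm_nonneg _) (norm_nonneg _)).1 (h2.trans h1.symm)

lemma tt_eq (x : E2) : tt x = ‖x‖ ^ 2 := by
  rw [EuclideanSpace.norm_sq_eq]; simp [tt]

lemma pd_congr {u v : E2 → ℂ} {x : E2} (h : u =ᶠ[nhds x] v) (i : Fin 2) : pd u i x = pd v i x := by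
  unfold pd; rw [h.fderiv_eq]

lemma lap_congr {u v : E2 → ℂ} {x : E2} (h : u =ᶠ[nhds x] v) : lap u x = lap v x := by
  unfold lap
  refine Finset.sum_congr rfl fun i _ => pd_congr ?_ i
  filter_upwards [h.eventuallyEq_nhds] with y hy using pd_congr hy i

lemma pd_diff {f : E2 → ℂ} (hf : ContDiff ℝ 2 f) (i : Fin 2) : 
    Differentiable ℝ (fun y => pd f i y) := by
  unfold pd
  have : ContDiff ℝ 1 (fun y => fderiv ℝ f y (EuclideanSpace.single i 1)) :=
    (hf.fderiv_right (m := 1) (by norm_num)).clm_apply contDiff_const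
  exact this.differentiable (by norm_num)

lemma lap_add {f g : E2 → ℂ} (hf : ContDiff ℝ 2 f) (hg : ContDiff ℝ 2 g) (x : E2) :
    lap (fun y => f y + g y) x = lap f x + lap g x := by
  unfold lap
  rw [← Finset.sum_add_distrib]
  refine Finset.sum_congr rfl fun i _ => ?_
  rw [← pd_add _ _ x (pd_diff hf i x) (pd_diff hg i x)]
  congr 1
  funext y
  exact pd_add _ _ y (hf.differentiable (by norm_num) y) (hg.differentiable (by norm_num) y) i

/-- Construction of the potential from a pointwise inequality. -/
lemma exists_W (u : E2 → ℂ) (lam : ℂ) (δ : E2 → ℝ) (hδ : ∀ x, 0 ≤ δ x)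
    (h : ∀ x, ‖lap u x + lam * u x‖ ≤ δ x * (‖pd u 0 x‖ + ‖pd u 1 x‖)) :
    ∃ W : E2 → EuclideanSpace ℂ (Fin 2),
      (∀ x, lap u x + lam * u x = ∑ i, W x i * pd u i x) ∧ ∀ x, ‖W x‖ ≤ 2 * δ x := by
  have key : ∀ x, ∃ w : EuclideanSpace ℂ (Fin 2),
      (lap u x + lam * u x = ∑ i, w i * pd u i x) ∧ ‖w‖ ≤ 2 * δ x := by
    intro x
    have aux : ∀ i : Fin 2, ‖pd u 0 x‖ + ‖pd u 1 x‖ ≤ 2 * ‖pd u i x‖ →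
        ∃ w : EuclideanSpace ℂ (Fin 2),
        (lap u x + lam * u x = ∑ i, w i * pd u i x) ∧ ‖w‖ ≤ 2 * δ x := by
      intro i hi
      have h3 : ‖lap u x + lam * u x‖ ≤ 2 * δ x * ‖pd u i x‖ := by
        nlinarith [h x, hδ x]
      refine ⟨EuclideanSpace.single i ((lap u x + lam * u x) / pd u i x), ?_, ?_⟩
      · rw [Finset.sum_eq_single i]
        · simp only [PiLp.single_apply, if_true]
          by_cases h0 : pd u i x = 0
          · simp only [h0, norm_zero, mul_zero, norm_le_zero_iff] at h3 ⊢
            exact h3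
          · field_simp
        · intro j _ hj
          simp [hj]
        · simp
      · rw [PiLp.norm_single, norm_div]
        exact div_le_of_le_mul₀ (norm_nonneg _) (by linarith [hδ x]) h3
    rcases le_total ‖pd u 0 x‖ ‖pd u 1 x‖ with h1 | h1
    · exact aux 1 (by linarith)
    · exact aux 0 (by linarith)
  choose W hW using key
  exact ⟨W, fun x => (hW x).1, fun x => (hW x).2⟩

/-- One-sided smooth step: `1` for `s ≤ 1/2`, `0` for `s ≥ 3/4`. -/
def SS (s : ℝ) : ℝ := Real.smoothTransition (3 - 4 * s)

/-- Smooth bump. -/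
def ph (s : ℝ) : ℝ := SS s * SS (-s)

lemma SS_contDiff : ContDiff ℝ 2 SS := by
  have h : ContDiff ℝ 2 Real.smoothTransition := Real.smoothTransition.contDiff (n := 2)
  exact h.comp (by fun_prop)

lemma ph_contDiff : ContDiff ℝ 2 ph := SS_contDiff.mul (SS_contDiff.comp contDiff_neg)

lemma SS_one {s : ℝ} (h : s ≤ 1 / 2) : SS s = 1 :=
  Real.smoothTransition.one_of_one_le (by linarith)

lemma SS_zero {s : ℝ} (h : 3 / 4 ≤ s) : SS s = 0 :=
  Real.smoothTransition.zero_of_nonpos (by linarith)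

lemma SS_nonneg (s : ℝ) : 0 ≤ SS s := Real.smoothTransition.nonneg _
lemma SS_le (s : ℝ) : SS s ≤ 1 := Real.smoothTransition.le_one _

lemma ph_nonneg (s : ℝ) : 0 ≤ ph s := mul_nonneg (SS_nonneg _) (SS_nonneg _)
lemma ph_le (s : ℝ) : ph s ≤ 1 := mul_le_one₀ (SS_le _) (SS_nonneg _) (SS_le _)

lemma ph_bound : ∃ K : ℝ, 0 ≤ K ∧ (∀ s, |deriv ph s| ≤ K) ∧ (∀ s, |deriv (deriv ph) s| ≤ K) := by
  have hc : HasCompactSupport ph := by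
    refine HasCompactSupport.intro (isCompact_Icc (a := (-1 : ℝ)) (b := 1)) fun s hs => ?_
    simp only [Set.mem_Icc, not_and_or, not_le] at hs
    rcases hs with h | h
    · simp [ph, SS_zero (s := -s) (by linarith)]
    · simp [ph, SS_zero (s := s) (by linarith)]
  have h1 := ((contDiff_succ_iff_deriv (n := 1)).1 ph_contDiff).2.2
  have h2 := ((contDiff_succ_iff_deriv (n := 0)).1 h1).2.2
  obtain ⟨K1, hK1⟩ := hc.deriv.exists_bound_of_continuous h1.continuous
  obtain ⟨K2, hK2⟩ := hc.deriv.deriv.exists_bound_of_continuous h2.continuous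
  refine ⟨max K1 K2, ?_, fun s => ?_, fun s => ?_⟩
  · exact le_max_of_le_left ((norm_nonneg _).trans (hK1 0))
  · exact (hK1 s).trans (le_max_left _ _)
  · exact (hK2 s).trans (le_max_right _ _)

/-- Regularised radius, as a function of the squared radius. -/
def sig (t : ℝ) : ℝ := Real.sqrt (1 + Real.smoothTransition t * (t - 1))

lemma sig_arg_pos (t : ℝ) : 0 < 1 + Real.smoothTransition t * (t - 1) := by
  rcases le_or_gt t 0 with h | h
  · rw [Real.smoothTransition.zero_of_nonpos h]; norm_num
  · have h1 := Real.smoothTransition.nonneg t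
    have h2 := Real.smoothTransition.le_one t
    rcases le_or_gt t 1 with h3 | h3 <;> nlinarith

lemma sig_pos (t : ℝ) : 0 < sig t := Real.sqrt_pos.2 (sig_arg_pos t)

lemma sig_contDiff : ContDiff ℝ 2 sig := by
  have h : ContDiff ℝ 2 Real.smoothTransition := Real.smoothTransition.contDiff (n := 2)
  unfold sig
  exact ContDiff.sqrt (contDiff_const.add (h.mul (by fun_prop))) fun t => (sig_arg_pos t).ne'

lemma sig_eq {t : ℝ} (h : 1 ≤ t) : sig t = Real.sqrt t := by
  unfold sig; rw [Real.smoothTransition.one_of_one_le h]; congr 1; ring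

lemma sig_le {t : ℝ} (h : t ≤ 1) : sig t ≤ 1 := by
  unfold sig
  rw [Real.sqrt_le_one]
  nlinarith [Real.smoothTransition.nonneg t]

/-- Radial profile. -/
def gg (a : ℂ) (m : ℝ) (n : ℕ) (P : ℝ → ℝ) (t : ℝ) : ℂ :=
  Complex.exp (-a * (sig t : ℂ)) * ((sig t)⁻¹ : ℝ) ^ n * (P (Real.sqrt (sig t) - m) : ℂ)

lemma gg_contDiff (a : ℂ) (m : ℝ) (n : ℕ) (P : ℝ → ℝ) (hP : ContDiff ℝ 2 P) :
    ContDiff ℝ 2 (gg a m n P) := by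
  have hof : ContDiff ℝ 2 (fun x : ℝ => (x : ℂ)) := Complex.ofRealCLM.contDiff
  have h1 : ContDiff ℝ 2 (fun t => (sig t : ℂ)) := hof.comp sig_contDiff
  have h2 : ContDiff ℝ 2 (fun t => (((sig t)⁻¹ : ℝ) : ℂ)) :=
    hof.comp (sig_contDiff.inv fun t => (sig_pos t).ne')
  have h3 : ContDiff ℝ 2 (fun t => ((P (Real.sqrt (sig t) - m) : ℝ) : ℂ)) :=
    hof.comp (hP.comp ((sig_contDiff.sqrt fun t => (sig_pos t).ne').sub contDiff_const))
  exact ((contDiff_const.mul h1).cexp.mul (h2.pow n)).mul h3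

/-- Exponential factor. -/
def EE (a : ℂ) (n : ℕ) (r : ℝ) : ℂ := Complex.exp (-a * (r : ℂ)) * ((r⁻¹ : ℝ) : ℂ) ^ n

lemma EE_deriv (a : ℂ) (n : ℕ) (t : ℝ) (ht : 0 < t) (p : ℝ → ℂ) (p1 : ℂ)
    (hp : HasDerivAt p p1 (Real.sqrt t)) :
    HasDerivAt (fun s => EE a n (Real.sqrt s) * p (Real.sqrt s))
      (EE a n (Real.sqrt t) * ((p1 - a * p (Real.sqrt t) - n / (Real.sqrt t : ℂ) * p (Real.sqrt t))
        / (2 * (Real.sqrt t : ℂ)))) t := by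
  have hr : 0 < Real.sqrt t := Real.sqrt_pos.2 ht
  have hrc : (Real.sqrt t : ℂ) ≠ 0 := by exact_mod_cast hr.ne'
  have hE : HasDerivAt (fun r => EE a n r * p r) (EE a n (Real.sqrt t) *
      (p1 - a * p (Real.sqrt t) - n / (Real.sqrt t : ℂ) * p (Real.sqrt t))) (Real.sqrt t) := by
    have h0 : HasDerivAt (fun r : ℝ => (r : ℂ)) 1 (Real.sqrt t) := HasDerivAt.ofReal_comp (hasDerivAt_id _)
    have h1 := (h0.const_mul (-a)).cexp
    have h2 := ((hasDerivAt_inv hr.ne').ofReal_comp).pow n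
    refine ((h1.mul h2).mul hp).congr_deriv ?_
    unfold EE
    rcases n with _ | n
    · simp; ring
    · simp only [Nat.add_sub_cancel, Pi.mul_apply, Pi.pow_apply, pow_succ]
      push_cast
      field_simp
      ring
  have h := hE.scomp t (Real.hasDerivAt_sqrt ht.ne')
  refine h.congr_deriv ?_
  simp only [Complex.real_smul]
  push_cast
  field_simp

lemma gg_out (a : ℂ) (m : ℝ) (n : ℕ) (P : ℝ → ℝ) (hP : ContDiff ℝ 2 P) (r : ℝ) (hr : 1 < r) :
    ∃ p1 p2 : ℝ, 
      p1 = deriv P (Real.sqrt r - m) / (2 * Real.sqrt r) ∧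
      p2 = deriv (deriv P) (Real.sqrt r - m) / (4 * r) 
        - deriv P (Real.sqrt r - m) / (4 * r * Real.sqrt r) ∧
      gg a m n P (r ^ 2) = EE a n r * (P (Real.sqrt r - m) : ℂ) ∧
      2 * (r : ℂ) ^ 2 * deriv (gg a m n P) (r ^ 2) + n * gg a m n P (r ^ 2) =
        r * EE a n r * (p1 - a * P (Real.sqrt r - m)) ∧
      4 * (r : ℂ) ^ 2 * deriv (deriv (gg a m n P)) (r ^ 2) + 4 * (n + 1) * deriv (gg a m n P) (r ^ 2) =
        EE a n r * (p2 + (1 / r - 2 * a) * p1 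
          + (a ^ 2 - a / r - n ^ 2 / r ^ 2) * P (Real.sqrt r - m)) := by
  have hP1 : Differentiable ℝ P := hP.differentiable (by norm_num)
  have hP2 : Differentiable ℝ (deriv P) := 
    (((contDiff_succ_iff_deriv (n := 1)).1 hP).2.2).differentiable (by norm_num)
  set q0 : ℝ → ℂ := fun r => (P (Real.sqrt r - m) : ℂ) with hq0
  set q1 : ℝ → ℂ := fun r => ((deriv P (Real.sqrt r - m) * (1 / (2 * Real.sqrt r)) : ℝ) : ℂ) with hq1
  set q2 : ℝ → ℂ := fun r => ((deriv (deriv P) (Real.sqrt r - m) / (4 * r) 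
        - deriv P (Real.sqrt r - m) / (4 * r * Real.sqrt r) : ℝ) : ℂ) with hq2
  have hs : ∀ ρ : ℝ, 1 < ρ → HasDerivAt (fun r => Real.sqrt r - m) (1 / (2 * Real.sqrt ρ)) ρ :=
    fun ρ hρ => (Real.hasDerivAt_sqrt (by linarith)).sub_const m
  have d0 : ∀ ρ : ℝ, 1 < ρ → HasDerivAt q0 (q1 ρ) ρ := fun ρ hρ =>
    ((hP1 (Real.sqrt ρ - m)).hasDerivAt.comp ρ (hs ρ hρ)).ofReal_comp
  have d1 : ∀ ρ : ℝ, 1 < ρ → HasDerivAt q1 (q2 ρ) ρ := fun ρ hρ => by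
    have hρ0 : 0 < ρ := by linarith
    have hsq : 0 < Real.sqrt ρ := Real.sqrt_pos.2 hρ0
    have e1 := (hP2 (Real.sqrt ρ - m)).hasDerivAt.comp ρ (hs ρ hρ)
    have e2 : HasDerivAt (fun r => 1 / (2 * Real.sqrt r)) (-(1 / (4 * ρ * Real.sqrt ρ))) ρ := by
      have := ((Real.hasDerivAt_sqrt hρ0.ne').const_mul 2).inv (by positivity)
      simp only [one_div]
      refine this.congr_deriv ?_
      have e : ρ = Real.sqrt ρ ^ 2 := (Real.sq_sqrt hρ0.le).symm
      rw [mul_pow, ← e]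
      field_simp
      norm_num
    refine (e1.mul e2).ofReal_comp.congr_deriv ?_
    rw [hq2]
    simp only [Function.comp]
    congr 1
    have e : ρ = Real.sqrt ρ ^ 2 := (Real.sq_sqrt hρ0.le).symm
    rw [sub_eq_add_neg]
    congr 1
    · rw [div_eq_mul_one_div, mul_assoc]; congr 1
      nth_rewrite 3 [e]
      field_simp; norm_num
    · field_simp
  set Q : ℝ → ℂ := fun ρ => (q1 ρ - a * q0 ρ - n / (ρ : ℂ) * q0 ρ) / (2 * (ρ : ℂ)) with hQ
  have f0 : ∀ t : ℝ, 1 < t → gg a m n P t = EE a n (Real.sqrt t) * q0 (Real.sqrt t) := fun t ht => by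
    unfold gg EE; rw [sig_eq ht.le]
  have f1 : ∀ t : ℝ, 1 < t → deriv (gg a m n P) t = EE a n (Real.sqrt t) * Q (Real.sqrt t) := 
    fun t ht => by
    have h1 : 1 < Real.sqrt t := by rw [Real.lt_sqrt] <;> linarith
    have := (EE_deriv a n t (by linarith) q0 _ (d0 _ h1))
    refine (this.congr_of_eventuallyEq ?_).deriv
    filter_upwards [lt_mem_nhds ht] with s hs using f0 s hs
  have dQ : HasDerivAt Q ((q2 r - a * q1 r - n / (r : ℂ) * q1 r + n / (r : ℂ) ^ 2 * q0 r) / (2 * (r : ℂ))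
      - (q1 r - a * q0 r - n / (r : ℂ) * q0 r) / (2 * (r : ℂ) ^ 2)) r := by
    have hrc : (r : ℂ) ≠ 0 := by exact_mod_cast (by linarith : r ≠ 0)
    have h0 : HasDerivAt (fun r : ℝ => (r : ℂ)) 1 r := HasDerivAt.ofReal_comp (hasDerivAt_id _)
    have h1 := d0 r hr
    have h2 := d1 r hr
    have h3 := ((h2.sub (h1.const_mul a)).sub (((hasDerivAt_const r (n : ℂ)).div h0 hrc).mul h1)).div
      (h0.const_mul 2) (mul_ne_zero two_ne_zero hrc)
    refine h3.congr_deriv ?_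
    simp only [Pi.sub_apply, Pi.mul_apply, Pi.div_apply]
    field_simp
    ring
  have hr2 : 1 < r ^ 2 := by nlinarith
  have hsr : Real.sqrt (r ^ 2) = r := Real.sqrt_sq (by linarith)
  have f2 : deriv (deriv (gg a m n P)) (r ^ 2) = EE a n r * ((((q2 r - a * q1 r - n / (r : ℂ) * q1 r + n / (r : ℂ) ^ 2 * q0 r) / (2 * (r : ℂ))
      - (q1 r - a * q0 r - n / (r : ℂ) * q0 r) / (2 * (r : ℂ) ^ 2)) - a * Q r - n / (r : ℂ) * Q r) / (2 * (r : ℂ))) := by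
    have := EE_deriv a n (r ^ 2) (by linarith) Q _ (by rw [hsr]; exact dQ)
    rw [hsr] at this
    refine (this.congr_of_eventuallyEq ?_).deriv
    filter_upwards [lt_mem_nhds hr2] with s hs using f1 s hs
  have hrc : (r : ℂ) ≠ 0 := by exact_mod_cast (by linarith : r ≠ 0)
  refine ⟨deriv P (Real.sqrt r - m) / (2 * Real.sqrt r), _, rfl, rfl, ?_, ?_, ?_⟩
  · rw [f0 _ hr2, hsr]
  · rw [f0 _ hr2, f1 _ hr2, hsr]
    have e : q1 r = ((deriv P (Real.sqrt r - m) / (2 * Real.sqrt r) : ℝ) : ℂ) := by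
      rw [hq1]; simp only [mul_one_div]
    rw [← e, hQ]
    change _ = r * EE a n r * (q1 r - a * q0 r)
    field_simp
    ring
  · rw [f2, f1 _ hr2, hsr]
    have e : q1 r = ((deriv P (Real.sqrt r - m) / (2 * Real.sqrt r) : ℝ) : ℂ) := by
      rw [hq1]; simp only [mul_one_div]
    rw [← e, hQ]
    change _ = EE a n r * (q2 r + (1 / r - 2 * a) * q1 r + (a ^ 2 - a / r - n ^ 2 / r ^ 2) * q0 r)
    field_simp
    ring

/-- Building block number `m`. -/
def Vp (a : ℂ) (B m : ℕ) (d : ℂ) : E2 → ℂ := VV (gg a m (B * m ^ 2) ph) d (B * m ^ 2)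

lemma Vp_contDiff (a : ℂ) (B m : ℕ) (d : ℂ) : ContDiff ℝ 2 (Vp a B m d) :=
  VV_contDiff _ (gg_contDiff _ _ _ _ ph_contDiff) _ _

lemma norm_EE (a : ℂ) (n : ℕ) (r : ℝ) (hr : 0 < r) (w : ℂ) (hw : ‖w‖ = r) :
    ‖EE a n r * w ^ n‖ = Real.exp (-(a.re * r)) := by
  unfold EE
  rw [norm_mul, norm_mul, Complex.norm_exp, norm_pow, norm_pow, hw, Complex.norm_real,
    Real.norm_of_nonneg (by positivity), mul_assoc, ← mul_pow, inv_mul_cancel₀ hr.ne']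
  simp

set_option maxHeartbeats 1600000 in
lemma term_est (a lam : ℂ) (B m : ℕ) (hB : 1 ≤ B) (hm : 1 ≤ m) (ha : a ^ 2 + lam = B ^ 2)
    (K : ℝ) (hK0 : 0 ≤ K) (hK1 : ∀ s, |deriv ph s| ≤ K) (hK2 : ∀ s, |deriv (deriv ph) s| ≤ K)
    (d : ℂ) (hd : d = Complex.I ∨ d = -Complex.I) (x : E2) (r : ℝ) (hxr : ‖x‖ = r) (hr : 1 < r)
    (hmr : |(m : ℝ) ^ 2 - r| ≤ 3 * Real.sqrt r) :
    ∃ e : ℂ, ‖e‖ = Real.exp (-(a.re * r)) ∧ Vp a B m d x = e * (ph (Real.sqrt r - m) : ℂ) ∧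
      ‖lap (Vp a B m d) x + lam * Vp a B m d x‖ ≤ Real.exp (-(a.re * r)) *
        ((K + (1 + 2 * ‖a‖) * K + ‖a‖ + 15 * B ^ 2) * (1 / Real.sqrt r)) ∧
      ‖(x 0 : ℂ) * pd (Vp a B m d) 0 x + (x 1 : ℂ) * pd (Vp a B m d) 1 x 
        + r * a * Vp a B m d x‖ ≤ r * (Real.exp (-(a.re * r)) * (K * (1 / Real.sqrt r))) ∧
      ‖(x 0 : ℂ) * pd (Vp a B m d) 1 x - (x 1 : ℂ) * pd (Vp a B m d) 0 x 
        - d * r * B * Vp a B m d x‖ ≤ r * (Real.exp (-(a.re * r)) * (3 * B * (1 / Real.sqrt r))) := by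
  have hn : 1 ≤ B * m ^ 2 := Nat.one_le_iff_ne_zero.2 (by positivity)
  have hr0 : 0 < r := by linarith
  have hd2 : d ^ 2 = -1 := by rcases hd with rfl | rfl <;> simp
  have hdn : ‖d‖ = 1 := by rcases hd with rfl | rfl <;> simp
  have hg := gg_contDiff a m (B * m ^ 2) ph ph_contDiff
  have hg1 : Differentiable ℝ (gg a m (B * m ^ 2) ph) := hg.differentiable (by norm_num)
  obtain ⟨p1, p2, hp1, hp2, hv, hrad, hlap⟩ := gg_out a m (B * m ^ 2) ph ph_contDiff r hr
  have htt : tt x = r ^ 2 := by rw [tt_eq, hxr]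
  have hL := lap_VV _ hg d hd2 _ hn x
  have hR := rad_VV _ hg1 d _ hn x
  have hA := ang_VV _ hg1 d hd2 _ hn x
  have hV : VV (gg a m (B * m ^ 2) ph) d (B * m ^ 2) x = gg a m (B * m ^ 2) ph (r ^ 2) * ww d x ^ (B * m ^ 2) := by
    rw [← htt]; rfl
  rw [htt] at hL hR
  have hN : ‖EE a (B * m ^ 2) r * ww d x ^ (B * m ^ 2)‖ = Real.exp (-(a.re * r)) :=
    norm_EE a _ r hr0 _ ((norm_ww d hd x).trans hxr)
  push_cast at hL hR hA hlap hrad hV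
  rw [hlap] at hL
  rw [hrad] at hR
  rw [hv] at hV
  have hsr : 1 < Real.sqrt r := by rw [Real.lt_sqrt] <;> linarith
  have hs2 : Real.sqrt r ^ 2 = r := Real.sq_sqrt hr0.le
  set δ := 1 / Real.sqrt r with hδ
  have hδ0 : 0 < δ := by positivity
  have hδ1 : δ ≤ 1 := by rw [hδ, div_le_one (by linarith)]; exact hsr.le
  have hrδ : 1 / r = δ ^ 2 := by rw [hδ, div_pow, hs2, one_pow]
  have hP0 := ph_nonneg (Real.sqrt r - m)
  have hP1 := ph_le (Real.sqrt r - m)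
  have hD1 := hK1 (Real.sqrt r - m)
  have hD2 := hK2 (Real.sqrt r - m)
  have bp1 : |p1| ≤ K * δ := by
    have e : p1 = deriv ph (Real.sqrt r - m) * (δ / 2) := by rw [hp1, hδ]; field_simp
    rw [e, abs_mul, abs_of_pos (by positivity : 0 < δ / 2)]
    have := mul_le_mul hD1 (by linarith : δ / 2 ≤ δ) (by positivity) hK0
    exact this
  have bp2 : |p2| ≤ K * δ := by
    have e : p2 = deriv (deriv ph) (Real.sqrt r - m) * (δ ^ 2 / 4) 
        - deriv ph (Real.sqrt r - m) * (δ ^ 3 / 4) := by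
      have : δ ^ 3 = 1 / r * δ := by rw [hrδ]; ring
      rw [hp2, this, ← hrδ, hδ]; field_simp
    have h1 : δ ^ 2 ≤ δ := by nlinarith
    have h2 : δ ^ 3 ≤ δ := by nlinarith
    rw [e]
    refine (abs_sub _ _).trans ?_
    rw [abs_mul, abs_mul, abs_of_pos (by positivity : 0 < δ ^ 2 / 4), 
      abs_of_pos (by positivity : 0 < δ ^ 3 / 4)]
    have := mul_le_mul hD2 (by linarith : δ ^ 2 / 4 ≤ δ / 2) (by positivity) hK0
    have := mul_le_mul hD1 (by linarith : δ ^ 3 / 4 ≤ δ / 2) (by positivity) hK0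
    linarith
  have hBpos : (1 : ℝ) ≤ B := by exact_mod_cast hB
  set ν : ℝ := (B : ℝ) * (m : ℝ) ^ 2 / r with hν
  have bν : |ν - B| ≤ 3 * B * δ := by
    have e : ν - B = B * δ ^ 2 * ((m : ℝ) ^ 2 - r) := by rw [← hrδ, hν]; field_simp
    rw [e, abs_mul, abs_of_nonneg (by positivity)]
    have e2 : δ ^ 2 * (3 * Real.sqrt r) = 3 * δ := by rw [hδ]; field_simp
    have h3 := mul_le_mul_of_nonneg_left hmr (by positivity : 0 ≤ (B : ℝ) * δ ^ 2)
    refine h3.trans (le_of_eq ?_)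
    rw [mul_assoc, e2]; ring
  have bν2 : |(B : ℝ) ^ 2 - ν ^ 2| ≤ 15 * B ^ 2 * δ := by
    have hν0 : 0 ≤ ν := by positivity
    have h4 : ν ≤ 4 * B := by
      have h5 := (abs_le.1 bν).2
      have h6 : 3 * (B : ℝ) * δ ≤ 3 * B * 1 := mul_le_mul_of_nonneg_left hδ1 (by positivity)
      linarith
    have e : (B : ℝ) ^ 2 - ν ^ 2 = -((ν - B) * (ν + B)) := by ring
    rw [e, abs_neg, abs_mul, abs_of_nonneg (by positivity : 0 ≤ ν + B)]
    refine (mul_le_mul bν (by linarith : ν + B ≤ 5 * B) (by positivity) (by positivity)).trans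
      (le_of_eq (by ring))
  have hrc : (r : ℂ) ≠ 0 := by exact_mod_cast hr0.ne'
  have hνc : (ν : ℂ) = B * m ^ 2 / r := by rw [hν]; push_cast; ring
  refine ⟨EE a (B * m ^ 2) r * ww d x ^ (B * m ^ 2), hN, ?_, ?_, ?_, ?_⟩
  · unfold Vp; rw [hV]; ring
  · unfold Vp
    have : lap (VV (gg a m (B * m ^ 2) ph) d (B * m ^ 2)) x + lam * VV (gg a m (B * m ^ 2) ph) d (B * m ^ 2) x
      = (EE a (B * m ^ 2) r * ww d x ^ (B * m ^ 2)) * (p2 + ((1 / r : ℝ) - 2 * a) * p1 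
        + (((B : ℝ) ^ 2 - ν ^ 2 : ℝ) - a * (1 / r : ℝ)) * ph (Real.sqrt r - m)) := by
      rw [hL, hV]
      push_cast
      rw [hνc, ← ha]
      field_simp
      ring
    rw [this, norm_mul, hN]
    refine mul_le_mul_of_nonneg_left ?_ (Real.exp_pos _).le
    have n1 : ‖(p2 : ℂ)‖ ≤ K * δ := by rw [Complex.norm_real]; exact bp2
    have n2 : ‖(((1 / r : ℝ) : ℂ) - 2 * a) * p1‖ ≤ (1 + 2 * ‖a‖) * (K * δ) := by
      rw [norm_mul]
      refine mul_le_mul ?_ (by rw [Complex.norm_real]; exact bp1) (norm_nonneg _) (by positivity)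
      refine (norm_sub_le _ _).trans ?_
      rw [Complex.norm_real, norm_mul, hrδ, Real.norm_of_nonneg (by positivity)]
      simp only [Complex.norm_ofNat]
      nlinarith
    have n3 : ‖((((B : ℝ) ^ 2 - ν ^ 2 : ℝ) : ℂ) - a * (1 / r : ℝ)) * ph (Real.sqrt r - m)‖ ≤
        (15 * B ^ 2 * δ + ‖a‖ * δ) * 1 := by
      rw [norm_mul]
      refine mul_le_mul ?_ (by rw [Complex.norm_real, Real.norm_of_nonneg hP0]; exact hP1)
        (norm_nonneg _) (by positivity)
      refine (norm_sub_le _ _).trans (add_le_add ?_ ?_)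
      · rw [Complex.norm_real]; exact bν2
      · rw [norm_mul, Complex.norm_real, hrδ, Real.norm_of_nonneg (by positivity)]
        exact mul_le_mul_of_nonneg_left (by nlinarith) (norm_nonneg _)
    refine (norm_add₃_le).trans ?_
    linarith
  · unfold Vp
    rw [hR, hV]
    have : ((r : ℂ) * EE a (B * m ^ 2) r * (p1 - a * ph (Real.sqrt r - m)) * ww d x ^ (B * m ^ 2) 
      + r * a * (EE a (B * m ^ 2) r * ph (Real.sqrt r - m) * ww d x ^ (B * m ^ 2))) = 
      r * ((EE a (B * m ^ 2) r * ww d x ^ (B * m ^ 2)) * p1) := by ring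
    rw [this, norm_mul, norm_mul, hN, Complex.norm_real, Complex.norm_real, 
      Real.norm_of_nonneg hr0.le]
    gcongr
    exact bp1
  · unfold Vp
    rw [hA, hV]
    have : d * (B * m ^ 2) * (EE a (B * m ^ 2) r * ph (Real.sqrt r - m) * ww d x ^ (B * m ^ 2))
      - d * r * B * (EE a (B * m ^ 2) r * ph (Real.sqrt r - m) * ww d x ^ (B * m ^ 2)) =
      r * ((EE a (B * m ^ 2) r * ww d x ^ (B * m ^ 2)) * ((ν - B : ℝ) * ph (Real.sqrt r - m))) * d := by
      push_cast
      rw [hνc]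
      field_simp
    rw [this, norm_mul, hdn, mul_one, norm_mul, norm_mul, hN, norm_mul, Complex.norm_real,
      Complex.norm_real, Complex.norm_real, Real.norm_of_nonneg hr0.le, Real.norm_of_nonneg hP0]
    refine mul_le_mul_of_nonneg_left (mul_le_mul_of_nonneg_left ?_ (Real.exp_pos _).le) hr0.le
    exact (mul_le_of_le_one_right (norm_nonneg _) hP1).trans bν

set_option maxHeartbeats 1600000 in
lemma outer_est (a lam : ℂ) (ha0 : a ≠ 0) (B : ℕ) (hB : 1 ≤ B) (ha : a ^ 2 + lam = B ^ 2) :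
    ∃ R0 C : ℝ, 0 < C ∧ ∀ (m : ℕ), R0 ≤ m → 2 ≤ m → ∀ (d : ℂ), (d = Complex.I ∨ d = -Complex.I) →
      ∀ x : E2, (m : ℝ) ≤ Real.sqrt ‖x‖ → Real.sqrt ‖x‖ < m + 1 → 
      ‖lap (fun y => Vp a B m d y + Vp a B (m + 1) (-d) y) x 
        + lam * (Vp a B m d x + Vp a B (m + 1) (-d) x)‖ ≤ C * (1 / Real.sqrt ‖x‖) *
        (‖pd (fun y => Vp a B m d y + Vp a B (m + 1) (-d) y) 0 x‖ +
         ‖pd (fun y => Vp a B m d y + Vp a B (m + 1) (-d) y) 1 x‖) ∧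
      ‖Vp a B m d x + Vp a B (m + 1) (-d) x‖ ≤ 2 * Real.exp (-(a.re * ‖x‖)) := by
  obtain ⟨K, hK0, hK1, hK2⟩ := ph_bound
  have hna : 0 < ‖a‖ := norm_pos_iff.2 ha0
  have hBpos : (1 : ℝ) ≤ B := by exact_mod_cast hB
  set C1 := K + (1 + 2 * ‖a‖) * K + ‖a‖ + 15 * (B : ℝ) ^ 2 with hC1
  have hC1p : 0 < C1 := by positivity
  refine ⟨2 * K / ‖a‖ + 6, 2 * C1 * (1 / ‖a‖ + 1 / B), by positivity, ?_⟩
  intro m hmR hm2 d hd x hmx hxm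
  have hm2' : (2 : ℝ) ≤ m := by exact_mod_cast hm2
  set r := ‖x‖ with hr
  have hs2 : Real.sqrt r ^ 2 = r := Real.sq_sqrt (norm_nonneg _)
  have hr1 : 1 < r := by nlinarith
  have hr0 : 0 < r := by linarith
  have hd' : -d = Complex.I ∨ -d = -Complex.I := by
    rcases hd with rfl | rfl <;> simp
  have hdn : ‖d‖ = 1 := by rcases hd with rfl | rfl <;> simp
  obtain ⟨e, he, hv, hl, hra, han⟩ := term_est a lam B m hB (by omega) ha K hK0 hK1 hK2 d hd x r rfl hr1
    (by rw [abs_le]; constructor <;> nlinarith)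
  obtain ⟨e', he', hv', hl', hra', han'⟩ := term_est a lam B (m + 1) hB (by omega) ha K hK0 hK1 hK2 
    (-d) hd' x r rfl hr1 (by push_cast; rw [abs_le]; constructor <;> nlinarith)
  have cd := Vp_contDiff a B m d
  have cd' := Vp_contDiff a B (m + 1) (-d)
  have dx := cd.differentiable (by norm_num) x
  have dx' := cd'.differentiable (by norm_num) x
  rw [lap_add cd cd', pd_add _ _ x dx dx', pd_add _ _ x dx dx']
  set E := Real.exp (-(a.re * r)) with hE
  have hE0 : 0 < E := Real.exp_pos _
  set δ := 1 / Real.sqrt r with hδ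
  have hδ0 : 0 < δ := by positivity
  set X := Vp a B m d x with hX
  set Y := Vp a B (m + 1) (-d) x with hY
  have nX : ‖X‖ = E * ph (Real.sqrt r - m) := by
    rw [hv, norm_mul, he, Complex.norm_real, Real.norm_of_nonneg (ph_nonneg _)]
  have nY : ‖Y‖ = E * ph (Real.sqrt r - (m + 1 : ℕ)) := by
    rw [hv', norm_mul, he', Complex.norm_real, Real.norm_of_nonneg (ph_nonneg _)]
  set P0 := pd (Vp a B m d) 0 x
  set P1 := pd (Vp a B m d) 1 x
  set Q0 := pd (Vp a B (m + 1) (-d)) 0 x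
  set Q1 := pd (Vp a B (m + 1) (-d)) 1 x
  set N := ‖P0 + Q0‖ + ‖P1 + Q1‖ with hN
  have hN0 : 0 ≤ N := by positivity
  have hx0 : ‖(x 0 : ℂ)‖ ≤ r := by rw [Complex.norm_real]; exact PiLp.norm_apply_le x 0
  have hx1 : ‖(x 1 : ℂ)‖ ≤ r := by rw [Complex.norm_real]; exact PiLp.norm_apply_le x 1
  have b1 : ‖(x 0 : ℂ) * (P0 + Q0) + (x 1 : ℂ) * (P1 + Q1)‖ ≤ r * N := by
    refine (norm_add_le _ _).trans ?_
    rw [norm_mul, norm_mul, hN, mul_add]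
    gcongr
  have b2 : ‖(x 0 : ℂ) * (P1 + Q1) - (x 1 : ℂ) * (P0 + Q0)‖ ≤ r * N := by
    refine (norm_sub_le _ _).trans ?_
    rw [norm_mul, norm_mul, hN, mul_add, add_comm]
    gcongr
  have c1 : r * (‖a‖ * ‖X + Y‖) ≤ r * (N + 2 * (E * (K * δ))) := by
    have : (r : ℂ) * a * (X + Y) = ((x 0 : ℂ) * P0 + (x 1 : ℂ) * P1 + r * a * X) + 
      ((x 0 : ℂ) * Q0 + (x 1 : ℂ) * Q1 + r * a * Y) - ((x 0 : ℂ) * (P0 + Q0) + (x 1 : ℂ) * (P1 + Q1)) := by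
      ring
    have h2 : ‖(r : ℂ) * a * (X + Y)‖ = r * (‖a‖ * ‖X + Y‖) := by
      rw [norm_mul, norm_mul, Complex.norm_real, Real.norm_of_nonneg hr0.le, mul_assoc]
    rw [← h2, this]
    refine (norm_sub_le _ _).trans ?_
    have := norm_add_le ((x 0 : ℂ) * P0 + (x 1 : ℂ) * P1 + r * a * X) 
      ((x 0 : ℂ) * Q0 + (x 1 : ℂ) * Q1 + r * a * Y)
    linarith
  have c2 : r * (B * ‖X - Y‖) ≤ r * (N + 2 * (E * (3 * B * δ))) := by
    have : d * (r : ℂ) * B * (X - Y) = ((x 0 : ℂ) * (P1 + Q1) - (x 1 : ℂ) * (P0 + Q0)) - 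
      (((x 0 : ℂ) * P1 - (x 1 : ℂ) * P0 - d * r * B * X) + 
      ((x 0 : ℂ) * Q1 - (x 1 : ℂ) * Q0 - (-d) * r * B * Y)) := by
      ring
    have h2 : ‖d * (r : ℂ) * B * (X - Y)‖ = r * (B * ‖X - Y‖) := by
      rw [norm_mul, norm_mul, norm_mul, Complex.norm_real, Real.norm_of_nonneg hr0.le, hdn, one_mul,
        Complex.norm_natCast, mul_assoc]
    rw [← h2, this]
    refine (norm_sub_le _ _).trans ?_
    have := norm_add_le ((x 0 : ℂ) * P1 - (x 1 : ℂ) * P0 - d * r * B * X)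
      ((x 0 : ℂ) * Q1 - (x 1 : ℂ) * Q0 - (-d) * r * B * Y)
    linarith
  have c1' := le_of_mul_le_mul_left c1 hr0
  have c2' := le_of_mul_le_mul_left c2 hr0
  have c3 : ‖X + Y‖ ≤ 1 / ‖a‖ * N + E * (2 * K / ‖a‖ * δ) := by
    have : ‖X + Y‖ = 1 / ‖a‖ * (‖a‖ * ‖X + Y‖) := by field_simp
    rw [this]
    refine (mul_le_mul_of_nonneg_left c1' (by positivity)).trans (le_of_eq ?_)
    ring
  have c4 : ‖X - Y‖ ≤ 1 / B * N + E * (6 * δ) := by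
    have : ‖X - Y‖ = 1 / B * (B * ‖X - Y‖) := by field_simp
    rw [this]
    refine (mul_le_mul_of_nonneg_left c2' (by positivity)).trans (le_of_eq ?_)
    field_simp
    ring
  have c5 : 2 * E ≤ ‖X + Y‖ + ‖X - Y‖ := by
    have t1 : 2 * ‖X‖ ≤ ‖X + Y‖ + ‖X - Y‖ := by
      have : ‖(X + Y) + (X - Y)‖ = 2 * ‖X‖ := by
        rw [show (X + Y) + (X - Y) = 2 * X by ring, norm_mul]; simp
      rw [← this]; exact norm_add_le _ _
    have t2 : 2 * ‖Y‖ ≤ ‖X + Y‖ + ‖X - Y‖ := by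
      have : ‖(X + Y) - (X - Y)‖ = 2 * ‖Y‖ := by
        rw [show (X + Y) - (X - Y) = 2 * Y by ring, norm_mul]; simp
      rw [← this]; exact norm_sub_le _ _
    rcases le_total (Real.sqrt r) (m + 1 / 2) with h | h
    · have : ph (Real.sqrt r - m) = 1 := by
        unfold ph; rw [SS_one (by linarith), SS_one (by linarith), one_mul]
      rw [this, mul_one] at nX
      linarith
    · have : ph (Real.sqrt r - (m + 1 : ℕ)) = 1 := by
        push_cast
        unfold ph; rw [SS_one (by linarith), SS_one (by linarith), one_mul]
      rw [this, mul_one] at nY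
      linarith
  have c6 : (2 * K / ‖a‖ + 6) * δ ≤ 1 := by
    rw [hδ, mul_one_div, div_le_one (by linarith)]
    linarith
  have c7 : E ≤ (1 / ‖a‖ + 1 / B) * N := by
    have h1 := mul_le_mul_of_nonneg_left c6 hE0.le
    have h2 : E * ((2 * K / ‖a‖ + 6) * δ) = E * (2 * K / ‖a‖ * δ) + E * (6 * δ) := by ring
    have h3 : (1 / ‖a‖ + 1 / B) * N = 1 / ‖a‖ * N + 1 / B * N := by ring
    rw [h3]
    linarith
  constructor
  · have : lap (Vp a B m d) x + lap (Vp a B (m + 1) (-d)) x + lam * (X + Y) = 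
      (lap (Vp a B m d) x + lam * X) + (lap (Vp a B (m + 1) (-d)) x + lam * Y) := by ring
    rw [this]
    refine (norm_add_le _ _).trans ((add_le_add hl hl').trans ?_)
    have h1 := mul_le_mul_of_nonneg_left c7 (by positivity : 0 ≤ 2 * (C1 * δ))
    refine le_trans (le_of_eq ?_) (h1.trans (le_of_eq ?_)) <;> ring
  · refine (norm_add_le _ _).trans ?_
    rw [nX, nY]
    have := mul_le_mul_of_nonneg_left (ph_le (Real.sqrt r - m)) hE0.le
    have := mul_le_mul_of_nonneg_left (ph_le (Real.sqrt r - (m + 1 : ℕ))) hE0.le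
    linarith

/-- Inner building block. -/
def V0 (a : ℂ) (B m : ℕ) (d : ℂ) : E2 → ℂ := VV (gg a m (B * m ^ 2) SS) d (B * m ^ 2)

lemma V0_contDiff (a : ℂ) (B m : ℕ) (d : ℂ) : ContDiff ℝ 2 (V0 a B m d) :=
  VV_contDiff _ (gg_contDiff _ _ _ _ SS_contDiff) _ _

lemma gg_SS_ne (a : ℂ) (m n : ℕ) (t : ℝ) (h : Real.sqrt (sig t) ≤ m) : gg a m n SS t ≠ 0 := by
  unfold gg
  rw [SS_one (by linarith)]
  have := (sig_pos t).ne'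
  refine mul_ne_zero (mul_ne_zero (Complex.exp_ne_zero _) (pow_ne_zero _ ?_)) (by simp)
  exact_mod_cast inv_ne_zero this

lemma sig_le_of (m : ℕ) (hm : 1 ≤ m) (t : ℝ) (h : t ≤ (m : ℝ) ^ 4) : Real.sqrt (sig t) ≤ m := by
  have hm' : (1 : ℝ) ≤ m := by exact_mod_cast hm
  rw [Real.sqrt_le_left (by positivity)]
  rcases le_total t 1 with h1 | h1
  · exact (sig_le h1).trans (by nlinarith)
  · rw [sig_eq h1, Real.sqrt_le_left (by positivity)]
    nlinarith

lemma inner_est (a lam : ℂ) (B m : ℕ) (hB : 1 ≤ B) (hm : 1 ≤ m)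
    (d : ℂ) (hd : d = Complex.I ∨ d = -Complex.I) :
    ∃ C : ℝ, 0 ≤ C ∧ ∀ x : E2, ‖x‖ ≤ (m : ℝ) ^ 2 →
      ‖lap (V0 a B m d) x + lam * V0 a B m d x‖ ≤ 
        C * (‖pd (V0 a B m d) 0 x‖ + ‖pd (V0 a B m d) 1 x‖) := by
  have hn : 1 ≤ B * m ^ 2 := Nat.one_le_iff_ne_zero.2 (by positivity)
  have hd2 : d ^ 2 = -1 := by rcases hd with rfl | rfl <;> simp
  have hdn : ‖d‖ = 1 := by rcases hd with rfl | rfl <;> simp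
  unfold V0
  set n := B * m ^ 2 with hndef
  have hg := gg_contDiff a m n SS SS_contDiff
  have hne : ∀ t ∈ Set.Icc (0 : ℝ) ((m : ℝ) ^ 4), gg a m n SS t ≠ 0 := fun t ht =>
    gg_SS_ne a m n t (sig_le_of m hm t ht.2)
  set g := gg a m n SS with hgdef
  have hg1 : Differentiable ℝ g := hg.differentiable (by norm_num)
  have h1 := ((contDiff_succ_iff_deriv (n := 1)).1 hg).2.2
  have h2 := ((contDiff_succ_iff_deriv (n := 0)).1 h1).2.2
  have c0 := hg.continuous
  have c1 := h1.continuous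
  have c2 := h2.continuous
  set L : ℝ → ℂ := fun t => 4 * (t : ℂ) * deriv (deriv g) t + 4 * (n + 1) * deriv g t + lam * g t
  have cL : Continuous L := by fun_prop
  have hcont : ContinuousOn (fun t => L t / g t) (Set.Icc (0 : ℝ) ((m : ℝ) ^ 4)) :=
    cL.continuousOn.div c0.continuousOn hne
  obtain ⟨C, hC⟩ := isCompact_Icc.exists_bound_of_continuousOn hcont
  have hC0 : 0 ≤ C := (norm_nonneg _).trans (hC 0 ⟨le_rfl, by positivity⟩)
  refine ⟨C * (m : ℝ) ^ 2, by positivity, fun x hx => ?_⟩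
  have ht : tt x ∈ Set.Icc (0 : ℝ) ((m : ℝ) ^ 4) := by
    rw [tt_eq]
    refine ⟨by positivity, ?_⟩
    calc ‖x‖ ^ 2 ≤ ((m : ℝ) ^ 2) ^ 2 := by gcongr
      _ = _ := by ring
  have hA := ang_VV _ hg1 d hd2 _ hn x
  rw [lap_VV _ hg d hd2 _ hn x]
  have e : ww d x ^ n * (4 * (tt x : ℂ) * deriv (deriv g) (tt x) + 4 * (n + 1) * deriv g (tt x)) 
      + lam * VV g d n x = (L (tt x) / g (tt x)) * VV g d n x := by
    have := hne _ ht
    simp only [VV, L]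
    field_simp
  rw [e, norm_mul]
  set N := ‖pd (VV g d n) 0 x‖ + ‖pd (VV g d n) 1 x‖ with hN
  have hx0 : ‖(x 0 : ℂ)‖ ≤ ‖x‖ := by rw [Complex.norm_real]; exact PiLp.norm_apply_le x 0
  have hx1 : ‖(x 1 : ℂ)‖ ≤ ‖x‖ := by rw [Complex.norm_real]; exact PiLp.norm_apply_le x 1
  have b2 : ‖(x 0 : ℂ) * pd (VV g d n) 1 x - (x 1 : ℂ) * pd (VV g d n) 0 x‖ ≤ ‖x‖ * N := by
    refine (norm_sub_le _ _).trans ?_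
    rw [norm_mul, norm_mul, hN, mul_add, add_comm]
    gcongr
  rw [hA, norm_mul, norm_mul, hdn, one_mul, Complex.norm_natCast] at b2
  have hn' : (1 : ℝ) ≤ n := by exact_mod_cast hn
  have b3 : ‖VV g d n x‖ ≤ (m : ℝ) ^ 2 * N :=
    (le_mul_of_one_le_left (norm_nonneg _) hn').trans
      (b2.trans (mul_le_mul_of_nonneg_right hx (by positivity)))
  calc ‖L (tt x) / g (tt x)‖ * ‖VV g d n x‖ ≤ C * ((m : ℝ) ^ 2 * N) := 
        mul_le_mul (hC _ ht) b3 (norm_nonneg _) hC0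
    _ = _ := by ring

/-- Alternating orientation. -/
def par (m : ℕ) : ℂ := if Even m then Complex.I else -Complex.I

lemma par_cases (m : ℕ) : par m = Complex.I ∨ par m = -Complex.I := by
  unfold par; split_ifs <;> simp

lemma par_succ (m : ℕ) : par (m + 1) = -par m := by
  unfold par
  by_cases h : Even m <;> simp [h, Nat.even_add_one]

/-- Square root of the regularised radius. -/
def tau (x : E2) : ℝ := Real.sqrt (sig (tt x))

lemma tau_cont : Continuous tau :=
  Real.continuous_sqrt.comp (sig_contDiff.continuous.comp tt_contDiff.continuous)

lemma tau_eq (x : E2) (h : 1 ≤ ‖x‖) : tau x = Real.sqrt ‖x‖ := by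
  unfold tau
  rw [sig_eq (by rw [tt_eq]; nlinarith), tt_eq, Real.sqrt_sq (norm_nonneg _)]

open Classical in
/-- The solution. -/
def uu (a : ℂ) (B m0 : ℕ) (x : E2) : ℂ :=
  if tau x < m0 then V0 a B m0 (par m0) x else ∑' k : ℕ, Vp a B (m0 + k) (par (m0 + k)) x

lemma Vp_zero (a : ℂ) (B m : ℕ) (d : ℂ) (x : E2) (h : tau x ≤ m - 3 / 4 ∨ m + 3 / 4 ≤ tau x) :
    Vp a B m d x = 0 := by
  have : ph (Real.sqrt (sig (tt x)) - m) = 0 := by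
    change ph (tau x - m) = 0
    unfold ph
    rcases h with h | h
    · rw [SS_zero (s := -(tau x - m)) (by linarith), mul_zero]
    · rw [SS_zero (s := (tau x - m)) (by linarith), zero_mul]
  simp [Vp, VV, gg, this]

lemma Vp_V0 (a : ℂ) (B m : ℕ) (d : ℂ) (x : E2) (h : m - 1 / 2 ≤ tau x) :
    Vp a B m d x = V0 a B m d x := by
  have : ph (Real.sqrt (sig (tt x)) - m) = SS (Real.sqrt (sig (tt x)) - m) := by
    change ph (tau x - m) = SS (tau x - m)
    unfold ph
    rw [SS_one (s := -(tau x - m)) (by linarith), mul_one]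
  simp [Vp, V0, VV, gg, this]

lemma uu_outer (a : ℂ) (B m0 k : ℕ) (x : E2) (h1 : ((m0 + k : ℕ) : ℝ) - 1 / 4 < tau x)
    (h2 : tau x < ((m0 + k : ℕ) : ℝ) + 5 / 4) :
    uu a B m0 x = Vp a B (m0 + k) (par (m0 + k)) x + Vp a B (m0 + k + 1) (-par (m0 + k)) x := by
  rw [← par_succ]
  push_cast at h1 h2
  unfold uu
  split_ifs with h
  · have hk : k = 0 := by
      by_contra hk
      have : (1 : ℝ) ≤ k := by exact_mod_cast Nat.one_le_iff_ne_zero.2 hk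
      linarith
    subst hk
    rw [Vp_zero a B (m0 + 0 + 1) _ x (by left; push_cast at h1 ⊢; linarith), add_zero]
    exact (Vp_V0 _ _ _ _ _ (by push_cast; linarith)).symm
  · rw [tsum_eq_sum (s := {k, k + 1})]
    · rw [Finset.sum_pair (by simp)]; rfl
    · intro j hj
      simp only [Finset.mem_insert, Finset.mem_singleton, not_or] at hj
      apply Vp_zero
      push_cast
      rcases Nat.lt_or_ge j k with hjk | hjk
      · have : (j : ℝ) + 1 ≤ k := by exact_mod_cast hjk
        right; linarith
      · have : (k : ℝ) + 2 ≤ j := by exact_mod_cast (by omega : k + 2 ≤ j)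
        left; linarith

lemma uu_inner (a : ℂ) (B m0 : ℕ) (x : E2) (h2 : tau x < (m0 : ℝ) + 1 / 4) :
    uu a B m0 x = V0 a B m0 (par m0) x := by
  by_cases h : tau x < m0
  · unfold uu; rw [if_pos h]
  · rw [uu_outer a B m0 0 x (by push_cast; linarith) (by push_cast; linarith),
      Vp_zero a B (m0 + 0 + 1) _ x (by left; push_cast; linarith), add_zero]
    exact (Vp_V0 _ _ _ _ _ (by push_cast; linarith))

lemma tau_inner (m0 : ℕ) (hm : 1 ≤ m0) (x : E2) (h : ‖x‖ ≤ (m0 : ℝ) ^ 2) : tau x ≤ m0 := by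
  apply sig_le_of m0 hm
  rw [tt_eq]
  calc ‖x‖ ^ 2 ≤ ((m0 : ℝ) ^ 2) ^ 2 := by gcongr
      _ = _ := by ring

lemma uu_inner_ev (a : ℂ) (B m0 : ℕ) (hm : 1 ≤ m0) (x : E2) (h : ‖x‖ ≤ (m0 : ℝ) ^ 2) :
    uu a B m0 =ᶠ[nhds x] V0 a B m0 (par m0) := by
  have h1 := tau_inner m0 hm x h
  filter_upwards [tau_cont.continuousAt.eventually_lt_const 
    (by linarith : tau x < (m0 : ℝ) + 1 / 4)] with y hy using uu_inner a B m0 y hy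

lemma uu_outer_ev (a : ℂ) (B m0 : ℕ) (hm : 1 ≤ m0) (x : E2) (h : (m0 : ℝ) ^ 2 ≤ ‖x‖) :
    ∃ m : ℕ, m0 ≤ m ∧ (m : ℝ) ≤ Real.sqrt ‖x‖ ∧ Real.sqrt ‖x‖ < m + 1 ∧ 
    uu a B m0 =ᶠ[nhds x] fun y => Vp a B m (par m) y + Vp a B (m + 1) (-par m) y := by
  have hm' : (1 : ℝ) ≤ m0 := by exact_mod_cast hm
  have hx : 1 ≤ ‖x‖ := by nlinarith
  have hs : (m0 : ℝ) ≤ Real.sqrt ‖x‖ := Real.le_sqrt_of_sq_le h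
  obtain ⟨k, hk⟩ := Nat.exists_eq_add_of_le (Nat.le_floor hs)
  have f1 := Nat.floor_le (Real.sqrt_nonneg ‖x‖)
  have f2 := Nat.lt_floor_add_one (Real.sqrt ‖x‖)
  rw [hk] at f1 f2
  refine ⟨m0 + k, by omega, f1, f2, ?_⟩
  have ht := tau_eq x hx
  filter_upwards [tau_cont.continuousAt.eventually_lt_const 
    (by linarith : tau x < ((m0 + k : ℕ) : ℝ) + 5 / 4), tau_cont.continuousAt.eventually_const_lt 
    (by linarith : ((m0 + k : ℕ) : ℝ) - 1 / 4 < tau x)] with y hy1 hy2 using 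
    uu_outer a B m0 k y hy2 hy1

lemma uu_contDiff (a : ℂ) (B m0 : ℕ) (hm : 1 ≤ m0) : ContDiff ℝ 2 (uu a B m0) := by
  rw [contDiff_iff_contDiffAt]
  intro x
  rcases le_total ‖x‖ ((m0 : ℝ) ^ 2) with h | h
  · exact (V0_contDiff a B m0 _).contDiffAt.congr_of_eventuallyEq (uu_inner_ev a B m0 hm x h)
  · obtain ⟨m, -, -, -, hu⟩ := uu_outer_ev a B m0 hm x h
    exact ((Vp_contDiff a B m _).add (Vp_contDiff a B (m + 1) _)).contDiffAt.congr_of_eventuallyEq hu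

lemma uu_ne (a : ℂ) (B m0 : ℕ) (hm : 1 ≤ m0) : uu a B m0 ≠ 0 := by
  intro h
  set x : E2 := EuclideanSpace.single 0 1
  have hx : ‖x‖ = 1 := by simp [x]
  have hm' : (1 : ℝ) ≤ m0 := by exact_mod_cast hm
  have h1 := (uu_inner_ev a B m0 hm x (by rw [hx]; nlinarith)).eq_of_nhds
  rw [h] at h1
  have h2 : ww (par m0) x ≠ 0 := by
    rw [← norm_ne_zero_iff, norm_ww _ (par_cases m0), hx]; norm_num
  have h3 := gg_SS_ne a m0 (B * m0 ^ 2) (tt x) (tau_inner m0 hm x (by rw [hx]; nlinarith))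
  exact mul_ne_zero h3 (pow_ne_zero _ h2) h1.symm

lemma bracket_low (x : E2) (M : ℝ) (hM : 1 ≤ M) (h : Real.sqrt (1 + ‖x‖ ^ 2) ≤ M ^ 2) :
    1 / M ≤ Real.sqrt (1 + ‖x‖ ^ 2) ^ (-(1 / 2 : ℝ)) := by
  have h0 : 0 < Real.sqrt (1 + ‖x‖ ^ 2) := by positivity
  rw [Real.rpow_neg h0.le, ← Real.sqrt_eq_rpow, one_div]
  refine inv_anti₀ (Real.sqrt_pos.2 h0) ?_
  rw [Real.sqrt_le_left (by linarith)]
  exact h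

lemma exists_a (lam : ℂ) : ∃ (B : ℕ) (a : ℂ), 1 ≤ B ∧ 0 < a.re ∧ a ^ 2 + lam = B ^ 2 := by
  obtain ⟨B, hB⟩ := exists_nat_gt (‖lam‖ + 1)
  have hB1 : (1 : ℝ) < B := by linarith [norm_nonneg lam]
  refine ⟨B, ((B : ℂ) ^ 2 - lam) ^ ((1 : ℂ) / 2), ?_, ?_, ?_⟩
  · exact_mod_cast hB1.le
  · have hre : 0 < ((B : ℂ) ^ 2 - lam).re := by
      have e : ((B : ℂ) ^ 2).re = (B : ℝ) ^ 2 := by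
        rw [← Complex.ofReal_natCast, ← Complex.ofReal_pow, Complex.ofReal_re]
      rw [Complex.sub_re, e]
      have := Complex.re_le_norm lam
      nlinarith
    have hne : ((B : ℂ) ^ 2 - lam) ≠ 0 := by
      intro h; rw [h] at hre; simp at hre
    rw [Complex.cpow_def_of_ne_zero hne, Complex.exp_re]
    refine mul_pos (Real.exp_pos _) (Real.cos_pos_of_mem_Ioo ?_)
    have him : (Complex.log ((B : ℂ) ^ 2 - lam) * (1 / 2)).im = ((B : ℂ) ^ 2 - lam).arg / 2 := by
      rw [show (1 / 2 : ℂ) = ((1 / 2 : ℝ) : ℂ) by push_cast; rfl, Complex.im_mul_ofReal, Complex.log_im]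
      ring
    rw [him]
    have h1 := Complex.neg_pi_lt_arg ((B : ℂ) ^ 2 - lam)
    have h2 := Complex.arg_le_pi ((B : ℂ) ^ 2 - lam)
    have h3 := Complex.abs_arg_lt_pi_div_two_iff.2 (Or.inl hre)
    have h4 := abs_lt.1 h3
    have := Real.pi_pos
    constructor <;> linarith [h4.1, h4.2]
  · rw [← Complex.cpow_nat_mul]
    norm_num

theorem stmt1 (lam : ℂ) :
    ∃ (C c : ℝ) (W : EuclideanSpace ℝ (Fin 2) → EuclideanSpace ℂ (Fin 2))
      (u : EuclideanSpace ℝ (Fin 2) → ℂ),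
      0 < C ∧ 0 < c ∧ u ≠ 0 ∧ ContDiff ℝ 2 u ∧
      (∀ x, lap u x + lam * u x = ∑ i, W x i * pd u i x) ∧
      (∀ x, ‖W x‖ ≤ C * Real.sqrt (1 + ‖x‖ ^ 2) ^ (-(1 / 2 : ℝ))) ∧
      (∀ x, ‖u x‖ ≤ C * Real.exp (-(c * ‖x‖))) := by

  obtain ⟨B, a, hB, hare, ha⟩ := exists_a lam
  have ha0 : a ≠ 0 := by rintro rfl; simp at hare
  obtain ⟨R0, C1, hC1, hout⟩ := outer_est a lam ha0 B hB ha
  obtain ⟨m1, hm1⟩ := exists_nat_ge R0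
  set m0 := m1 + 2 with hm0
  have hm01 : 1 ≤ m0 := by omega
  have hm0' : (2 : ℝ) ≤ m0 := by exact_mod_cast (by omega : 2 ≤ m0)
  obtain ⟨C2, hC2, hin⟩ := inner_est a lam B m0 hB hm01 (par m0) (par_cases m0)
  set u := uu a B m0 with hu
  have hcd : ContDiff ℝ 2 u := uu_contDiff a B m0 hm01
  obtain ⟨C3, hC3⟩ := (isCompact_closedBall (0 : E2) ((m0 : ℝ) ^ 2)).exists_bound_of_continuousOn
    hcd.continuous.continuousOn
  have hC30 : 0 ≤ C3 := (norm_nonneg _).trans (hC3 0 (by simp))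
  set M : ℝ := 1 + (m0 : ℝ) ^ 2 with hM
  have hM1 : 1 ≤ M := by rw [hM]; nlinarith
  set C4 := 2 * C1 + C2 * M with hC4
  have hC4p : 0 < C4 := by positivity
  have hmain : ∀ x, ‖lap u x + lam * u x‖ ≤ 
      (C4 * Real.sqrt (1 + ‖x‖ ^ 2) ^ (-(1 / 2 : ℝ))) * (‖pd u 0 x‖ + ‖pd u 1 x‖) := by
    intro x
    have hJ : 0 < Real.sqrt (1 + ‖x‖ ^ 2) ^ (-(1 / 2 : ℝ)) := by positivity
    rcases le_total ‖x‖ ((m0 : ℝ) ^ 2) with h | h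
    · have hev := uu_inner_ev a B m0 hm01 x h
      have h1 := hin x h
      rw [← lap_congr hev, ← pd_congr hev, ← pd_congr hev, ← hev.eq_of_nhds] at h1
      refine h1.trans (mul_le_mul_of_nonneg_right ?_ (by positivity))
      have h2 := bracket_low x M hM1 (by
        rw [Real.sqrt_le_left (by positivity)]
        have : ‖x‖ ^ 2 ≤ ((m0 : ℝ) ^ 2) ^ 2 := by gcongr
        have h5 : 1 + ‖x‖ ^ 2 ≤ M ^ 2 := by rw [hM]; nlinarith
        nlinarith)
      calc C2 = C2 * M * (1 / M) := by field_simp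
        _ ≤ C2 * M * Real.sqrt (1 + ‖x‖ ^ 2) ^ (-(1 / 2 : ℝ)) := by gcongr
        _ ≤ _ := by
          refine mul_le_mul_of_nonneg_right ?_ hJ.le
          rw [hC4]; linarith
    · obtain ⟨m, hmm, hmx, hxm, hev⟩ := uu_outer_ev a B m0 hm01 x h
      have hmm' : (m0 : ℝ) ≤ m := by exact_mod_cast hmm
      have hmR : R0 ≤ m := by
        have : (m0 : ℝ) = m1 + 2 := by rw [hm0]; push_cast; rfl
        linarith
      have h1 := (hout m hmR (by omega) (par m) (par_cases m) x hmx hxm).1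
      have hev0 : u x = _ := hev.eq_of_nhds
      rw [← lap_congr hev, ← pd_congr hev, ← pd_congr hev, ← hev0] at h1
      refine h1.trans (mul_le_mul_of_nonneg_right ?_ (by positivity))
      have hx1 : 1 ≤ ‖x‖ := by nlinarith
      have hs1 : 1 ≤ Real.sqrt ‖x‖ := by linarith
      have hs2 : Real.sqrt ‖x‖ ^ 2 = ‖x‖ := Real.sq_sqrt (norm_nonneg _)
      have h2 := bracket_low x (2 * Real.sqrt ‖x‖) (by linarith) (by
        rw [mul_pow, hs2, Real.sqrt_le_left (by positivity)]
        nlinarith)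
      calc C1 * (1 / Real.sqrt ‖x‖) = 2 * C1 * (1 / (2 * Real.sqrt ‖x‖)) := by field_simp
        _ ≤ 2 * C1 * Real.sqrt (1 + ‖x‖ ^ 2) ^ (-(1 / 2 : ℝ)) := by gcongr
        _ ≤ _ := by
          refine mul_le_mul_of_nonneg_right ?_ hJ.le
          rw [hC4]
          have : 0 ≤ C2 * M := by positivity
          linarith
  obtain ⟨W, hW1, hW2⟩ := exists_W u lam _ (fun x => by positivity) hmain
  set C5 := C3 * Real.exp (a.re * (m0 : ℝ) ^ 2) with hC5
  have hC50 : 0 ≤ C5 := by positivity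
  refine ⟨2 * C4 + C5 + 2, a.re, W, u, by positivity, hare, uu_ne a B m0 hm01, hcd, hW1, ?_, ?_⟩
  · intro x
    have hJ : 0 < Real.sqrt (1 + ‖x‖ ^ 2) ^ (-(1 / 2 : ℝ)) := by positivity
    refine (hW2 x).trans ?_
    rw [← mul_assoc]
    exact mul_le_mul_of_nonneg_right (by linarith) hJ.le
  · intro x
    have hE := Real.exp_pos (-(a.re * ‖x‖))
    rcases le_total ‖x‖ ((m0 : ℝ) ^ 2) with h | h
    · have h1 := hC3 x (by simpa using h)
      have h2 : C3 ≤ C5 * Real.exp (-(a.re * ‖x‖)) := by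
        rw [hC5, mul_assoc, ← Real.exp_add]
        refine le_mul_of_one_le_right hC30 (Real.one_le_exp ?_)
        nlinarith
      exact (h1.trans h2).trans (mul_le_mul_of_nonneg_right (by linarith) hE.le)
    · obtain ⟨m, hmm, hmx, hxm, hev⟩ := uu_outer_ev a B m0 hm01 x h
      have hmm' : (m0 : ℝ) ≤ m := by exact_mod_cast hmm
      have hmR : R0 ≤ m := by
        have : (m0 : ℝ) = m1 + 2 := by rw [hm0]; push_cast; rfl
        linarith
      have h1 := (hout m hmR (by omega) (par m) (par_cases m) x hmx hxm).2
      have hev0 : u x = _ := hev.eq_of_nhds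
      rw [hev0]
      exact h1.trans (mul_le_mul_of_nonneg_right (by linarith) hE.le)
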